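/- Lower bound for the natural pseudo-distance: Let (M,φ) and (N,ψ) be size pairs with M and N homeomorphic. Then d_match(ℓ*_{(M,φ)}, ℓ*_{(N,ψ)}) ≤ inf_h max_{P∈M} |φ(P) − ψ(h(P))|, where h ranges over all homeomorphisms from M to N. -/

import Mathlib

open Set Topology
open scoped ENNReal

noncomputable def rsf {M : Type*} [TopologicalSpace M] (φ : M → ℝ) (x y : ℝ) : ℕ :=
  Set.ncard {C : Set M | ∃ P, φ P ≤ x ∧ C = connectedComponentIn {Q | φ Q ≤ y} P}

noncomputable def mult {M : Type*} [TopologicalSpace M] (φ : M → ℝ) (p : ℝ × ℝ) : ℤ :=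
  sInf {z : ℤ | ∃ ε : ℝ, 0 < ε ∧ p.1 + ε < p.2 - ε ∧
    z = (rsf φ (p.1 + ε) (p.2 - ε) : ℤ) - (rsf φ (p.1 - ε) (p.2 - ε) : ℤ)
      - (rsf φ (p.1 + ε) (p.2 + ε) : ℤ) + (rsf φ (p.1 - ε) (p.2 + ε) : ℤ)}

noncomputable def multInf {M : Type*} [TopologicalSpace M] (φ : M → ℝ) (k : ℝ) : ℤ :=
  sInf {z : ℤ | ∃ ε : ℝ, 0 < ε ∧ k + ε < 1 / ε ∧
    z = (rsf φ (k + ε) (1 / ε) : ℤ) - (rsf φ (k - ε) (1 / ε) : ℤ)}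

open scoped Classical in
noncomputable def eDist (p q : ℝ × EReal) : ℝ≥0∞ :=
  if p.2 = ⊤ ∧ q.2 = ⊤ then ENNReal.ofReal |p.1 - q.1|
  else if p.2 = ⊤ ∨ q.2 = ⊤ then ⊤
  else ENNReal.ofReal (min (max |p.1 - q.1| |p.2.toReal - q.2.toReal|)
    (max ((p.2.toReal - p.1) / 2) ((q.2.toReal - q.1) / 2)))

def IsRepSeq {M : Type*} [TopologicalSpace M] (φ : M → ℝ) (a : ℕ → ℝ × EReal) : Prop :=
  (∃ k : ℝ, a 0 = (k, ⊤) ∧ 0 < multInf φ k) ∧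
  (∀ i : ℕ, 0 < i →
    (∃ x y : ℝ, a i = (x, (y : EReal)) ∧ x < y ∧ 0 < mult φ (x, y)) ∨
    (∃ x : ℝ, a i = (x, (x : EReal)))) ∧
  (∀ x y : ℝ, x < y → 0 < mult φ (x, y) →
    Set.ncard {i : ℕ | a i = (x, (y : EReal))} = (mult φ (x, y)).toNat) ∧
  {i : ℕ | ∃ x : ℝ, a i = (x, (x : EReal))}.Infinite

noncomputable def dMatchSeq (a b : ℕ → ℝ × EReal) : ℝ≥0∞ :=
  ⨅ σ : {σ : ℕ → ℕ // Function.Bijective σ}, ⨆ i : ℕ, eDist (a i) (b (σ.1 i))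

noncomputable def dMatch {M N : Type*} [TopologicalSpace M] [TopologicalSpace N]
    (φ : M → ℝ) (ψ : N → ℝ) : ℝ≥0∞ :=
  sInf {s : ℝ≥0∞ | ∃ a b, IsRepSeq φ a ∧ IsRepSeq ψ b ∧ s = dMatchSeq a b}

/-!
Transporting `ψ` along a homeomorphism reduces the claim to the stability of the matching distance
on one space: if `|φ - ψ| ≤ δ` then `dMatch φ ψ ≤ δ`. Put `χ = ψ - δ`, so that `χ ≤ φ ≤ χ + 2δ`,
and let `I x y` be the number of components of `{χ ≤ y}` meeting `{φ ≤ x}`. This mixed size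
function interpolates between those of `φ` and `χ`. Against that of `φ`, only the function cutting
out the larger sublevel set changes: over each birth time, the `k`-th longest bars of the two have
deaths that differ by at most `2δ`. Against that of `χ`, only the function cutting out the smaller
one changes, which is the same situation once births and deaths are exchanged. The composite of the
two matchings raises both coordinates of a cornerpoint of `χ` by at most `2δ` to reach one of `φ`,
and raising them by exactly `δ` gives a cornerpoint of `ψ`.
-/

section ConnectedComponents

variable {M : Type*} [TopologicalSpace M] {A A' B B' : Set M}

/-- The number of connected components of `B` meeting `A`, for `A ⊆ B`. As for `Set.ncard`, the
value is `0` when there are infinitely many. -/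
noncomputable def componentCount (A B : Set M) : ℕ :=
  (connectedComponentIn B '' A).ncard

lemma biUnion_connectedComponentIn (hB : B ⊆ B') {P : M} (hP : P ∈ B) :
    ⋃ Q ∈ connectedComponentIn B P, connectedComponentIn B' Q = connectedComponentIn B' P := by
  have h : ∀ Q ∈ connectedComponentIn B P,
      connectedComponentIn B' Q = connectedComponentIn B' P := fun Q hQ =>
    (connectedComponentIn_eq (connectedComponentIn_mono P hB hQ)).symm
  rw [iUnion₂_congr h]
  exact biUnion_const ⟨P, mem_connectedComponentIn hP⟩ _

-- Enlarging `B` sends the components meeting `A'` but not `A` onto a set containing all the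
-- components of `B'` with that property.
lemma componentCount_add_componentCount_le (hA : A ⊆ A') (hAB : A' ⊆ B) (hB : B ⊆ B')
    (hfin : (connectedComponentIn B '' A').Finite) :
    componentCount A' B' + componentCount A B ≤ componentCount A' B + componentCount A B' := by
  let enlarge : Set M → Set M := fun C => ⋃ Q ∈ C, connectedComponentIn B' Q
  have image_enlarge : ∀ S ⊆ B,
      enlarge '' (connectedComponentIn B '' S) = connectedComponentIn B' '' S := fun S hS => by
    rw [image_image]
    exact image_congr fun P hP => biUnion_connectedComponentIn hB (hS hP)
  have hfin' : (connectedComponentIn B' '' A').Finite :=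
    image_enlarge A' hAB ▸ hfin.image enlarge
  have hsub : connectedComponentIn B' '' A' \ connectedComponentIn B' '' A ⊆
      enlarge '' (connectedComponentIn B '' A' \ connectedComponentIn B '' A) := by
    rw [← image_enlarge A' hAB, ← image_enlarge A (hA.trans hAB)]
    rintro _ ⟨⟨C, hC, rfl⟩, hCA⟩
    exact ⟨C, ⟨hC, fun h => hCA ⟨C, h, rfl⟩⟩, rfl⟩
  have hle := (ncard_le_ncard hsub (hfin.sdiff.image enlarge)).trans (ncard_image_le hfin.sdiff)
  have hcard := ncard_sdiff_add_ncard_of_subset (image_mono (f := connectedComponentIn B) hA) hfin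
  have hcard' :=
    ncard_sdiff_add_ncard_of_subset (image_mono (f := connectedComponentIn B') hA) hfin'
  unfold componentCount
  lia

lemma finite_image_connectedComponentIn_of_isCompact [LocallyConnectedSpace M]
    (hA : IsCompact A) (hAB : A ⊆ interior B) : (connectedComponentIn B '' A).Finite := by
  obtain ⟨t, -, ht⟩ := hA.elim_nhds_subcover (connectedComponentIn (interior B)) fun P hP =>
    isOpen_interior.connectedComponentIn.mem_nhds (mem_connectedComponentIn (hAB hP))
  refine (t.finite_toSet.image (connectedComponentIn B)).subset ?_
  rintro _ ⟨Q, hQ, rfl⟩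
  obtain ⟨P, hPt, hQP⟩ := mem_iUnion₂.1 (ht hQ)
  exact ⟨P, hPt, connectedComponentIn_eq (connectedComponentIn_mono P interior_subset hQP)⟩

lemma componentCount_image_homeomorph {N : Type*} [TopologicalSpace N] (h : M ≃ₜ N)
    (A B : Set M) : componentCount (h '' A) (h '' B) = componentCount A B := by
  have hcomponent (P : M) :
      connectedComponentIn (h '' B) (h P) = h '' connectedComponentIn B P := by
    by_cases hP : P ∈ B
    · exact (h.image_connectedComponentIn hP).symm
    · rw [connectedComponentIn_eq_empty hP, image_empty,
        connectedComponentIn_eq_empty (mt h.injective.mem_set_image.1 hP)]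
  rw [componentCount, image_image, image_congr fun P _ => hcomponent P, ← image_image (h '' ·),
    ncard_image_of_injective _ (image_injective.2 h.injective), componentCount]

end ConnectedComponents

section RankFunctions

variable {F G H : ℝ → ℝ → ℤ}

/-- An abstract rank function: `G x y`, which only matters for `x < y`, stands for the number of
bars born up to `x` and still alive after `y`. The first condition says that the number of bars
born in `(x, x']` and dying in `(y, y']` is nonnegative; the other two bound the region in which
bars are born and die. -/
structure IsRankFunction (G : ℝ → ℝ → ℤ) : Prop where
  box_le : ∀ ⦃x x' y y' : ℝ⦄, x ≤ x' → x' < y → y ≤ y' → G x' y' + G x y ≤ G x' y + G x y'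
  eq_zero_of_ge : ∃ Y, ∀ ⦃x y : ℝ⦄, x < y → Y ≤ y → G x y = 0
  eq_zero_of_le : ∃ X, ∀ ⦃x y : ℝ⦄, x < y → x ≤ X → G x y = 0

lemma IsRankFunction.mono_left (hG : IsRankFunction G) {x x' y : ℝ} (hx : x ≤ x') (hy : x' < y) :
    G x y ≤ G x' y := by
  obtain ⟨Y, hY⟩ := hG.eq_zero_of_ge
  have hle := hG.box_le hx hy (le_max_left y Y)
  have hlt : x' < max y Y := hy.trans_le (le_max_left _ _)
  rw [hY hlt (le_max_right _ _), hY (hx.trans_lt hlt) (le_max_right _ _)] at hle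
  linarith

/-- The rank function of the bars reflected by `(b, d) ↦ (-d, -b)`, which exchanges births and
deaths. -/
def reflect (G : ℝ → ℝ → ℤ) (x y : ℝ) : ℤ := G (-y) (-x)

lemma IsRankFunction.reflect (hG : IsRankFunction G) : IsRankFunction (reflect G) where
  box_le x x' y y' hx hxy hy := by
    have := hG.box_le (neg_le_neg hy) (neg_lt_neg hxy) (neg_le_neg hx)
    unfold _root_.reflect
    linarith
  eq_zero_of_ge := by
    obtain ⟨X, hX⟩ := hG.eq_zero_of_le
    exact ⟨-X, fun x y hxy hy => hX (neg_lt_neg hxy) (by linarith)⟩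
  eq_zero_of_le := by
    obtain ⟨Y, hY⟩ := hG.eq_zero_of_ge
    exact ⟨-Y, fun x y hxy hx => hY (neg_lt_neg hxy) (by linarith)⟩

/-- `F` has at most as many bars as `G` over every interval of births, when `F` counts those alive
`c` later than `G` does. -/
def IncrementsLE (c : ℝ) (F G : ℝ → ℝ → ℤ) : Prop :=
  ∀ ⦃x x' y : ℝ⦄, x ≤ x' → x' < y → F x' (y + c) - F x (y + c) ≤ G x' y - G x y

lemma IsRankFunction.incrementsLE_self (hG : IsRankFunction G) {c : ℝ} (hc : 0 ≤ c) :
    IncrementsLE c G G := fun x x' y hx hy => by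
  have := hG.box_le hx hy (le_add_of_nonneg_right hc)
  linarith

section OneSidedLimits

/-- The number of bars in the box of radii `ε` and `η` about the point `p`. -/
def boxCount (G : ℝ → ℝ → ℤ) (p : ℝ × ℝ) (ε η : ℝ) : ℤ :=
  G (p.1 + ε) (p.2 - η) - G (p.1 - ε) (p.2 - η) - G (p.1 + ε) (p.2 + η) + G (p.1 - ε) (p.2 + η)

/-- The multiplicity of the point `p` as a cornerpoint of `G`; meaningful for `p.1 < p.2`. -/
noncomputable def cornerMultiplicity (G : ℝ → ℝ → ℤ) (p : ℝ × ℝ) : ℤ :=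
  sInf ((fun ε => boxCount G p ε ε) '' Ioo 0 ((p.2 - p.1) / 2))

/-- The number of bars of `G` born exactly at `b` and alive after `y`; meaningful for `b < y`. -/
noncomputable def aliveCount (G : ℝ → ℝ → ℤ) (b y : ℝ) : ℤ :=
  sInf ((fun ε => G (b + ε) y - G (b - ε) y) '' Ioo 0 (y - b))

lemma eventually_eq_sInf_image_of_monotoneOn {α : Type*} [LinearOrder α] [DenselyOrdered α]
    [TopologicalSpace α] [OrderTopology α] {f : α → ℤ} {a c : α} (hac : a < c)
    (hf : MonotoneOn f (Ioo a c)) (hbdd : BddBelow (f '' Ioo a c)) :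
    ∀ᶠ ε in 𝓝[>] a, f ε = sInf (f '' Ioo a c) := by
  obtain ⟨ε₀, hε₀, hmin⟩ := Int.csInf_mem ((nonempty_Ioo.2 hac).image f) hbdd
  filter_upwards [Ioo_mem_nhdsGT hε₀.1] with ε hε
  have hε' : ε ∈ Ioo a c := ⟨hε.1, hε.2.trans hε₀.2⟩
  exact le_antisymm (hmin ▸ hf hε' hε₀ hε.2.le) (csInf_le hbdd (mem_image_of_mem f hε'))

namespace IsRankFunction

lemma boxCount_mono (hG : IsRankFunction G) {p : ℝ × ℝ} {ε ε' η η' : ℝ} (hε : 0 ≤ ε) (hη : 0 ≤ η)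
    (hεε' : ε ≤ ε') (hηη' : η ≤ η') (hlt : p.1 + ε' < p.2 - η') :
    boxCount G p ε η ≤ boxCount G p ε' η' := by
  have right : G (p.1 + ε') (p.2 + η') + G (p.1 + ε) (p.2 - η') ≤
      G (p.1 + ε') (p.2 - η') + G (p.1 + ε) (p.2 + η') :=
    hG.box_le (by linarith) (by linarith) (by linarith)
  have left : G (p.1 - ε) (p.2 + η') + G (p.1 - ε') (p.2 - η') ≤
      G (p.1 - ε) (p.2 - η') + G (p.1 - ε') (p.2 + η') :=
    hG.box_le (by linarith) (by linarith) (by linarith)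
  have bottom : G (p.1 + ε) (p.2 - η) + G (p.1 - ε) (p.2 - η') ≤
      G (p.1 + ε) (p.2 - η') + G (p.1 - ε) (p.2 - η) :=
    hG.box_le (by linarith) (by linarith) (by linarith)
  have top : G (p.1 + ε) (p.2 + η') + G (p.1 - ε) (p.2 + η) ≤
      G (p.1 + ε) (p.2 + η) + G (p.1 - ε) (p.2 + η') :=
    hG.box_le (by linarith) (by linarith) (by linarith)
  unfold boxCount
  linarith

lemma eventually_boxCount_eq (hG : IsRankFunction G) {p : ℝ × ℝ} (hp : p.1 < p.2) :
    ∀ᶠ ε in 𝓝[>] (0 : ℝ), boxCount G p ε ε = cornerMultiplicity G p := by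
  refine eventually_eq_sInf_image_of_monotoneOn (by linarith) ?_ ⟨0, ?_⟩
  · intro ε hε ε' hε' hle
    exact hG.boxCount_mono hε.1.le hε.1.le hle hle (by linarith [hε'.2])
  · rintro _ ⟨ε, hε, rfl⟩
    have := hG.boxCount_mono (p := p) le_rfl le_rfl hε.1.le hε.1.le (by linarith [hε.2])
    simpa [boxCount] using this

lemma eventually_sub_eq_aliveCount (hG : IsRankFunction G) {b y : ℝ} (hby : b < y) :
    ∀ᶠ ε in 𝓝[>] (0 : ℝ), G (b + ε) y - G (b - ε) y = aliveCount G b y := by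
  refine eventually_eq_sInf_image_of_monotoneOn (sub_pos.2 hby) ?_ ⟨0, ?_⟩
  · intro ε hε ε' hε' hle
    exact sub_le_sub (hG.mono_left (by linarith) (by linarith [hε'.2]))
      (hG.mono_left (by linarith) (by linarith [hε.1]))
  · rintro _ ⟨ε, hε, rfl⟩
    exact sub_nonneg.2 (hG.mono_left (by linarith [hε.1]) (by linarith [hε.2]))

lemma aliveCount_nonneg (hG : IsRankFunction G) {b y : ℝ} (hby : b < y) :
    0 ≤ aliveCount G b y := by
  obtain ⟨ε, hε, hpos, hlt⟩ :=
    ((hG.eventually_sub_eq_aliveCount hby).and (Ioo_mem_nhdsGT (sub_pos.2 hby))).exists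
  rw [← hε]
  exact sub_nonneg.2 (hG.mono_left (by linarith) (by linarith))

end IsRankFunction

lemma IncrementsLE.aliveCount_le {c : ℝ} (h : IncrementsLE c F G) (hF : IsRankFunction F)
    (hG : IsRankFunction G) (hc : 0 ≤ c) {b y : ℝ} (hby : b < y) :
    aliveCount F b (y + c) ≤ aliveCount G b y := by
  obtain ⟨ε, ⟨hεF, hεG⟩, hpos, hlt⟩ :=
    (((hF.eventually_sub_eq_aliveCount (by linarith : b < y + c)).and
      (hG.eventually_sub_eq_aliveCount hby)).and (Ioo_mem_nhdsGT (sub_pos.2 hby))).exists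
  rw [← hεF, ← hεG]
  exact h (by linarith) (by linarith)

namespace IsRankFunction

lemma aliveCount_anti (hG : IsRankFunction G) {b y y' : ℝ} (hby : b < y) (hy : y ≤ y') :
    aliveCount G b y' ≤ aliveCount G b y := by
  simpa using (hG.incrementsLE_self (sub_nonneg.2 hy)).aliveCount_le hG hG (sub_nonneg.2 hy) hby

lemma aliveCount_eq_zero_of_ge (hG : IsRankFunction G) :
    ∃ Y, ∀ ⦃b y : ℝ⦄, b < y → Y ≤ y → aliveCount G b y = 0 := by
  obtain ⟨Y, hY⟩ := hG.eq_zero_of_ge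
  refine ⟨Y, fun b y hby hy => ?_⟩
  obtain ⟨ε, hε, hpos, hlt⟩ :=
    ((hG.eventually_sub_eq_aliveCount hby).and (Ioo_mem_nhdsGT (sub_pos.2 hby))).exists
  rw [← hε, hY (by linarith) hy, hY (by linarith) hy, sub_zero]

-- A thin box of radii `ε ≪ η` contains the square box of radius `ε` and is contained in the one of
-- radius `η`; both squares already count `cornerMultiplicity G p` bars once `η` is small.
lemma eventually_aliveCount_sub_eq (hG : IsRankFunction G) {p : ℝ × ℝ} (hp : p.1 < p.2) :
    ∀ᶠ η in 𝓝[>] (0 : ℝ),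
      aliveCount G p.1 (p.2 - η) - aliveCount G p.1 (p.2 + η) = cornerMultiplicity G p := by
  have hhalf : 0 < (p.2 - p.1) / 2 := by linarith
  obtain ⟨η₀, hη₀, hsquare⟩ := mem_nhdsGT_iff_exists_Ioc_subset.1
    ((hG.eventually_boxCount_eq hp).and (Ioo_mem_nhdsGT hhalf))
  filter_upwards [Ioc_mem_nhdsGT hη₀] with η hη
  obtain ⟨hcountη, -, hlt⟩ := hsquare hη
  obtain ⟨ε, ⟨hbelow, habove⟩, hε, hεη⟩ :=
    (((hG.eventually_sub_eq_aliveCount (by linarith : p.1 < p.2 - η)).and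
      (hG.eventually_sub_eq_aliveCount (by linarith [hη.1] : p.1 < p.2 + η))).and
      (Ioo_mem_nhdsGT hη.1)).exists
  obtain ⟨hcountε, -⟩ := hsquare ⟨hε, hεη.le.trans hη.2⟩
  have hthin : boxCount G p ε η = aliveCount G p.1 (p.2 - η) - aliveCount G p.1 (p.2 + η) := by
    unfold boxCount
    linarith
  rw [← hthin]
  apply le_antisymm
  · exact hcountη ▸ hG.boxCount_mono hε.le hη.1.le hεη.le le_rfl (by linarith)
  · exact hcountε ▸ hG.boxCount_mono hε.le hε.le le_rfl hεη.le (by linarith)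

-- Both counts are monotone in `η`, in opposite directions, so their difference can only be
-- eventually constant if each of them is.
lemma exists_eventually_aliveCount_eq (hG : IsRankFunction G) {b d : ℝ} (hbd : b < d) :
    ∃ m n : ℕ, n - m = (cornerMultiplicity G (b, d)).toNat ∧ ∀ᶠ η in 𝓝[>] (0 : ℝ),
      aliveCount G b (d + η) = m ∧ aliveCount G b (d - η) = n := by
  obtain ⟨η₀, hη₀, hdiff⟩ := mem_nhdsGT_iff_exists_Ioc_subset.1
    ((hG.eventually_aliveCount_sub_eq (p := (b, d)) hbd).and (Ioo_mem_nhdsGT (sub_pos.2 hbd)))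
  obtain ⟨hdiff₀, -, hlt₀⟩ := hdiff (right_mem_Ioc.2 hη₀)
  have hη₀' : 0 < η₀ := hη₀
  have hm := hG.aliveCount_nonneg (by linarith : b < d + η₀)
  have hn := hG.aliveCount_nonneg (by linarith : b < d - η₀)
  refine ⟨(aliveCount G b (d + η₀)).toNat, (aliveCount G b (d - η₀)).toNat, by lia, ?_⟩
  filter_upwards [Ioc_mem_nhdsGT hη₀] with η hη
  obtain ⟨hdiffη, hpos, -⟩ := hdiff hη
  have hbelow := hG.aliveCount_anti (by linarith : b < d - η₀) (sub_le_sub_left hη.2 d)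
  have habove := hG.aliveCount_anti (by linarith : b < d + η) (add_le_add_right hη.2 d)
  constructor <;> lia

end IsRankFunction

end OneSidedLimits

section Bars

/-- The death of the `k`-th longest bar of `G` born at `b`, counting from `0`; it is `b` itself, so
that the bar is trivial, if there is no such bar. -/
noncomputable def deathTime (G : ℝ → ℝ → ℤ) (b : ℝ) (k : ℕ) : ℝ :=
  sSup (insert b {y | b < y ∧ (k : ℤ) < aliveCount G b y})

/-- The times at which some bar of `G` is born. -/
def births (G : ℝ → ℝ → ℤ) : Set ℝ := {b | ∃ y, b < y ∧ 0 < aliveCount G b y}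

lemma births_subset (h : IncrementsLE 0 F G) (hF : IsRankFunction F) (hG : IsRankFunction G) :
    births F ⊆ births G := by
  rintro b ⟨y, hby, hpos⟩
  refine ⟨y, hby, hpos.trans_le ?_⟩
  simpa using h.aliveCount_le hF hG le_rfl hby

namespace IsRankFunction

lemma bddAbove_lt_aliveCount (hG : IsRankFunction G) (b : ℝ) (k : ℕ) :
    BddAbove (insert b {y | b < y ∧ (k : ℤ) < aliveCount G b y}) := by
  obtain ⟨Y, hY⟩ := hG.aliveCount_eq_zero_of_ge
  refine BddAbove.insert b ⟨Y, fun y ⟨hby, hky⟩ => ?_⟩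
  by_contra! hlt
  have := hY hby hlt.le
  lia

lemma le_deathTime (hG : IsRankFunction G) (b : ℝ) (k : ℕ) : b ≤ deathTime G b k :=
  le_csSup (hG.bddAbove_lt_aliveCount b k) (mem_insert _ _)

lemma lt_deathTime_iff (hG : IsRankFunction G) {b d : ℝ} {k : ℕ} (hbd : b ≤ d) :
    d < deathTime G b k ↔ ∃ y, d < y ∧ (k : ℤ) < aliveCount G b y := by
  rw [deathTime, lt_csSup_iff (hG.bddAbove_lt_aliveCount b k) (insert_nonempty _ _)]
  constructor
  · rintro ⟨y, rfl | ⟨-, hky⟩, hdy⟩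
    · exact absurd hdy hbd.not_gt
    · exact ⟨y, hdy, hky⟩
  · rintro ⟨y, hdy, hky⟩
    exact ⟨y, Or.inr ⟨hbd.trans_lt hdy, hky⟩, hdy⟩

lemma deathTime_le_iff (hG : IsRankFunction G) {b d : ℝ} {k : ℕ} (hbd : b ≤ d) :
    deathTime G b k ≤ d ↔ ∀ y, d < y → aliveCount G b y ≤ k := by
  rw [← not_lt, hG.lt_deathTime_iff hbd]
  push Not
  rfl

lemma deathTime_eq_self (hG : IsRankFunction G) {b : ℝ} (hb : b ∉ births G) (k : ℕ) :
    deathTime G b k = b := by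
  refine le_antisymm ((hG.deathTime_le_iff le_rfl).2 fun y hby => ?_) (hG.le_deathTime b k)
  by_contra! hky
  exact hb ⟨y, hby, (Int.natCast_nonneg k).trans_lt hky⟩

lemma lt_deathTime_iff_of_eventually (hG : IsRankFunction G) {b d : ℝ} {k m : ℕ} (hbd : b < d)
    (hm : ∀ᶠ η in 𝓝[>] (0 : ℝ), aliveCount G b (d + η) = m) : d < deathTime G b k ↔ k < m := by
  rw [hG.lt_deathTime_iff hbd.le]
  constructor
  · rintro ⟨y, hdy, hky⟩
    obtain ⟨η, hm, hη, hηy⟩ := (hm.and (Ioo_mem_nhdsGT (sub_pos.2 hdy))).exists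
    have := hG.aliveCount_anti (by linarith : b < d + η) (by linarith : d + η ≤ y)
    lia
  · intro hkm
    obtain ⟨η, hm, hη⟩ := (hm.and self_mem_nhdsWithin).exists
    exact ⟨d + η, lt_add_of_pos_right d hη, hm ▸ Int.ofNat_lt.2 hkm⟩

lemma le_deathTime_iff_of_eventually (hG : IsRankFunction G) {b d : ℝ} {k n : ℕ} (hbd : b < d)
    (hn : ∀ᶠ η in 𝓝[>] (0 : ℝ), aliveCount G b (d - η) = n) : d ≤ deathTime G b k ↔ k < n := by
  constructor
  · contrapose!
    intro hnk
    obtain ⟨η, hn, hη, hηb⟩ := (hn.and (Ioo_mem_nhdsGT (sub_pos.2 hbd))).exists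
    refine ((hG.deathTime_le_iff (by linarith)).2 fun y hy => ?_).trans_lt (sub_lt_self d hη)
    have := hG.aliveCount_anti (by linarith : b < d - η) hy.le
    lia
  · contrapose!
    intro hlt
    obtain ⟨η, hn, -, hηd⟩ := (hn.and (Ioo_mem_nhdsGT (sub_pos.2 hlt))).exists
    have := (hG.deathTime_le_iff (hG.le_deathTime b k)).1 le_rfl (d - η) (by linarith)
    lia

lemma encard_deathTime_eq (hG : IsRankFunction G) {b d : ℝ} (hbd : b < d) :
    {k | deathTime G b k = d}.encard = (cornerMultiplicity G (b, d)).toNat := by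
  obtain ⟨m, n, hmn, hev⟩ := hG.exists_eventually_aliveCount_eq hbd
  obtain ⟨hm, hn⟩ := Filter.eventually_and.1 hev
  have hfiber : {k | deathTime G b k = d} = Finset.Ico m n := by
    ext k
    simp only [mem_ofPred_eq, Finset.coe_Ico, mem_Ico]
    rw [← hG.le_deathTime_iff_of_eventually hbd hn, ← not_lt,
      ← hG.lt_deathTime_iff_of_eventually hbd hm, not_lt, le_antisymm_iff]
  rw [hfiber, encard_coe_eq_coe_finsetCard, Nat.card_Ico, hmn]

-- A birth `b` makes `x ↦ G x q` jump at `b` for every rational `q` slightly larger than `b`.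
lemma countable_births (hG : IsRankFunction G) : (births G).Countable := by
  have hjumps (q : ℚ) :
      {b ∈ Iio (q : ℝ) | ¬ ContinuousWithinAt (fun x => G x q) (Iio q) b}.Countable :=
    MonotoneOn.countable_not_continuousWithinAt fun x _ x' hx' hxx' => hG.mono_left hxx' hx'
  refine (countable_iUnion hjumps).mono ?_
  rintro b ⟨y, hby, hpos⟩
  obtain ⟨q, hbq, hqy⟩ := exists_rat_btwn hby
  refine mem_iUnion.2 ⟨q, hbq, fun hcont => (hpos.trans_le (hG.aliveCount_anti hbq hqy.le)).ne' ?_⟩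
  have hconst : ∀ᶠ x in 𝓝 b, G x q = G b q := by
    have := (hcont.continuousAt (Iio_mem_nhds hbq)).tendsto
    rwa [nhds_discrete ℤ, Filter.tendsto_pure] at this
  have hright : Filter.Tendsto (fun ε : ℝ => b + ε) (𝓝[>] 0) (𝓝 b) :=
    tendsto_nhdsWithin_of_tendsto_nhds (Continuous.tendsto' (by fun_prop) _ _ (add_zero b))
  have hleft : Filter.Tendsto (fun ε : ℝ => b - ε) (𝓝[>] 0) (𝓝 b) :=
    tendsto_nhdsWithin_of_tendsto_nhds (Continuous.tendsto' (by fun_prop) _ _ (sub_zero b))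
  obtain ⟨ε, ⟨hplus, hminus⟩, halive⟩ := (((hright.eventually hconst).and
    (hleft.eventually hconst)).and (hG.eventually_sub_eq_aliveCount hbq)).exists
  rw [← halive, hplus, hminus, sub_self]

end IsRankFunction

lemma IncrementsLE.deathTime_le {c : ℝ} (h : IncrementsLE c F G) (hF : IsRankFunction F)
    (hG : IsRankFunction G) (hc : 0 ≤ c) (b : ℝ) (k : ℕ) :
    deathTime F b k ≤ deathTime G b k + c := by
  have hb := hG.le_deathTime b k
  refine (hF.deathTime_le_iff (by linarith)).2 fun y hy => ?_
  have hle := h.aliveCount_le hF hG hc (by linarith : b < y - c)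
  rw [sub_add_cancel] at hle
  exact hle.trans ((hG.deathTime_le_iff hb).1 le_rfl _ (by linarith))

end Bars

section Diagrams

variable {J K : Type*} {m : ℝ × ℝ → ℤ} {u : J → ℝ × ℝ} {v : K → ℝ × ℝ}

/-- The family `u` lists the points above the diagonal with the multiplicities prescribed by `m`,
along with infinitely many points of the diagonal. -/
structure IsDiagram (m : ℝ × ℝ → ℤ) (u : J → ℝ × ℝ) : Prop where
  le : ∀ j, (u j).1 ≤ (u j).2
  encard_fiber : ∀ p : ℝ × ℝ, p.1 < p.2 → (u ⁻¹' {p}).encard = (m p).toNat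
  infinite_diagonal : {j | (u j).1 = (u j).2}.Infinite

lemma IsDiagram.map (hu : IsDiagram m u) (T : ℝ × ℝ ≃ ℝ × ℝ)
    (hT : ∀ p, (T p).2 - (T p).1 = p.2 - p.1) : IsDiagram (m ∘ T.symm) (T ∘ u) where
  le j := by
    have := hu.le j
    have := hT (u j)
    simp only [Function.comp_apply]
    linarith
  encard_fiber p hp := by
    have hlt := hT (T.symm p)
    rw [T.apply_symm_apply] at hlt
    rw [preimage_comp, ← T.image_symm_eq_preimage, image_singleton,
      hu.encard_fiber _ (by linarith), Function.comp_apply]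
  infinite_diagonal := by
    refine hu.infinite_diagonal.mono fun j hj => ?_
    have := hT (u j)
    simp only [mem_ofPred_eq, Function.comp_apply] at hj ⊢
    linarith

lemma IsDiagram.comp_equiv (hu : IsDiagram m u) (e : K ≃ J) : IsDiagram m (u ∘ e) where
  le k := hu.le (e k)
  encard_fiber p hp := by
    rw [preimage_comp, encard_preimage_of_bijective e.bijective, hu.encard_fiber p hp]
  infinite_diagonal := hu.infinite_diagonal.preimage (e.surjective.range_eq ▸ subset_univ _)

lemma exists_equiv_of_encard_preimage_eq.{w} {J K : Type w} {T : Type*} [Countable J] [Countable K]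
    {f : J → T} {g : K → T} (h : ∀ t, (f ⁻¹' {t}).encard = (g ⁻¹' {t}).encard) :
    ∃ e : J ≃ K, ∀ j, g (e j) = f j := by
  have hfiber (t : T) : Nonempty ({j // f j = t} ≃ {k // g k = t}) :=
    Cardinal.eq.1 ((Cardinal.toENat_eq_iff_of_le_aleph0 (Cardinal.mk_le_aleph0)
      (Cardinal.mk_le_aleph0)).1 (h t))
  let e (t : T) : {j // f j = t} ≃ {k // g k = t} := (hfiber t).some
  exact ⟨Equiv.ofFiberEquiv e, Equiv.ofFiberEquiv_map e⟩

/-- The quotient map identifying the points on or below the diagonal, which go to `none`. -/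
noncomputable def collapseDiagonal (p : ℝ × ℝ) : Option (ℝ × ℝ) :=
  if p.1 < p.2 then some p else none

lemma collapseDiagonal_eq_some {p q : ℝ × ℝ} :
    collapseDiagonal p = some q ↔ p.1 < p.2 ∧ p = q := by
  simp [collapseDiagonal]

lemma collapseDiagonal_eq_none {p : ℝ × ℝ} : collapseDiagonal p = none ↔ p.2 ≤ p.1 := by
  simp [collapseDiagonal]

lemma IsDiagram.encard_collapseDiagonal (hu : IsDiagram m u) (t : Option (ℝ × ℝ)) :
    ((collapseDiagonal ∘ u) ⁻¹' {t}).encard =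
      t.elim ⊤ fun p => if p.1 < p.2 then ((m p).toNat : ℕ∞) else 0 := by
  rcases t with _ | p
  · refine encard_eq_top (hu.infinite_diagonal.mono fun j hj => ?_)
    exact collapseDiagonal_eq_none.2 hj.ge
  simp only [Option.elim_some]
  split_ifs with hp
  · rw [← hu.encard_fiber p hp]
    congr 1
    ext j
    simp only [mem_preimage, Function.comp_apply, mem_singleton_iff, collapseDiagonal_eq_some]
    exact and_iff_right_of_imp fun h => h ▸ hp
  · rw [encard_eq_zero, eq_empty_iff_forall_notMem]
    intro j hj
    obtain ⟨hlt, rfl⟩ := collapseDiagonal_eq_some.1 hj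
    exact hp hlt

lemma IsDiagram.exists_equiv.{w} {J K : Type w} [Countable J] [Countable K] {u : J → ℝ × ℝ}
    {v : K → ℝ × ℝ} (hu : IsDiagram m u) (hv : IsDiagram m v) :
    ∃ e : J ≃ K, ∀ j, v (e j) = u j ∨ (u j).1 = (u j).2 ∧ (v (e j)).1 = (v (e j)).2 := by
  obtain ⟨e, he⟩ := exists_equiv_of_encard_preimage_eq fun t =>
    (hu.encard_collapseDiagonal t).trans (hv.encard_collapseDiagonal t).symm
  refine ⟨e, fun j => ?_⟩
  rcases hcollapse : collapseDiagonal (u j) with _ | p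
  · have hcollapse' := (he j).trans hcollapse
    rw [collapseDiagonal_eq_none] at hcollapse
    exact Or.inr ⟨(hu.le j).antisymm hcollapse,
      (hv.le (e j)).antisymm (collapseDiagonal_eq_none.1 hcollapse')⟩
  · have hcollapse' := (he j).trans hcollapse
    rw [collapseDiagonal_eq_some] at hcollapse
    exact Or.inl ((collapseDiagonal_eq_some.1 hcollapse').2.trans hcollapse.2.symm)

/-- The bars of `G` born in `B`, as points `(birth, death)`; each element of `B` gives a sequence of
bars, trivial ones included. -/
noncomputable def barsBornIn (G : ℝ → ℝ → ℤ) (B : Set ℝ) (z : B × ℕ) : ℝ × ℝ :=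
  (z.1, deathTime G z.1 z.2)

-- The point `b₀` supplies the points of the diagonal, since every other birth may well come with
-- infinitely many nontrivial bars.
lemma IsRankFunction.isDiagram_barsBornIn (hG : IsRankFunction G) {B : Set ℝ} (hB : births G ⊆ B)
    {b₀ : ℝ} (hb₀B : b₀ ∈ B) (hb₀ : b₀ ∉ births G) :
    IsDiagram (cornerMultiplicity G) (barsBornIn G B) where
  le z := hG.le_deathTime z.1 z.2
  encard_fiber := by
    rintro ⟨b, d⟩ hbd
    by_cases hb : b ∈ B
    · have hfiber : barsBornIn G B ⁻¹' {(b, d)} =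
          Prod.mk (⟨b, hb⟩ : B) '' {k | deathTime G b k = d} := by
        ext ⟨⟨b', hb'⟩, k⟩
        constructor
        · intro h
          obtain ⟨rfl, rfl⟩ := Prod.mk.inj h
          exact ⟨k, rfl, rfl⟩
        · rintro ⟨k, rfl, h⟩
          obtain ⟨⟨⟩, rfl⟩ := Prod.mk.inj h
          rfl
      rw [hfiber, (Prod.mk_right_injective _).encard_image, hG.encard_deathTime_eq hbd]
    · have hself : ∀ k, deathTime G b k = b := hG.deathTime_eq_self fun h => hb (hB h)
      have hfiber : barsBornIn G B ⁻¹' {(b, d)} = ∅ :=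
        eq_empty_iff_forall_notMem.2 fun z hz => hb ((Prod.mk.inj hz).1 ▸ z.1.2)
      rw [← hG.encard_deathTime_eq hbd, hfiber]
      simp [hself, hbd.ne]
  infinite_diagonal := by
    refine (infinite_range_of_injective (Prod.mk_right_injective (⟨b₀, hb₀B⟩ : B))).mono ?_
    rintro _ ⟨k, rfl⟩
    exact (hG.deathTime_eq_self hb₀ k).symm

lemma exists_same_birth_matching {c : ℝ} (hc : 0 ≤ c) (hF : IsRankFunction F)
    (hG : IsRankFunction G) (hFG : IncrementsLE 0 F G) (hGF : IncrementsLE c G F) :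
    ∃ (J : Type) (_ : Countable J) (u v : J → ℝ × ℝ), IsDiagram (cornerMultiplicity F) u ∧
      IsDiagram (cornerMultiplicity G) v ∧
      ∀ j, (u j).1 = (v j).1 ∧ (v j).2 ∈ Icc (u j).2 ((u j).2 + c) := by
  obtain ⟨b₀, hb₀⟩ := (hG.countable_births.dense_compl ℝ).nonempty
  have hcountable := (hG.countable_births.insert b₀).to_subtype
  refine ⟨↥(insert b₀ (births G)) × ℕ, inferInstance, barsBornIn F _, barsBornIn G _,
    hF.isDiagram_barsBornIn ((births_subset hFG hF hG).trans (subset_insert _ _)) (mem_insert _ _)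
      fun h => hb₀ (births_subset hFG hF hG h),
    hG.isDiagram_barsBornIn (subset_insert _ _) (mem_insert _ _) hb₀, fun z => ⟨rfl, ?_, ?_⟩⟩
  · exact (hFG.deathTime_le hF hG le_rfl z.1 z.2).trans_eq (add_zero _)
  · exact hGF.deathTime_le hG hF hc z.1 z.2

/-- The reflection `(b, d) ↦ (-d, -b)`, as in `reflect`. -/
@[simps]
def negSwap : ℝ × ℝ ≃ ℝ × ℝ where
  toFun p := (-p.2, -p.1)
  invFun p := (-p.2, -p.1)
  left_inv p := by simp
  right_inv p := by simp

lemma cornerMultiplicity_reflect (G : ℝ → ℝ → ℤ) (b d : ℝ) :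
    cornerMultiplicity (reflect G) (-d, -b) = cornerMultiplicity G (b, d) := by
  have hbox (ε : ℝ) : boxCount (reflect G) (-d, -b) ε ε = boxCount G (b, d) ε ε := by
    simp only [boxCount, reflect, neg_add, neg_sub, neg_neg, sub_neg_eq_add, ← sub_eq_add_neg,
      add_comm ε]
    ring
  simp only [cornerMultiplicity, hbox, neg_sub_neg]

lemma IsDiagram.negSwap_comp (hu : IsDiagram (cornerMultiplicity (reflect G)) u) :
    IsDiagram (cornerMultiplicity G) (negSwap ∘ u) := by
  convert hu.map negSwap fun p => by simp [neg_add_eq_sub] using 1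
  ext p
  exact (cornerMultiplicity_reflect G p.1 p.2).symm

lemma IsDiagram.add_comp {δ : ℝ}
    (hu : IsDiagram (cornerMultiplicity fun x y => G (x + δ) (y + δ)) u) :
    IsDiagram (cornerMultiplicity G) ((· + (δ, δ)) ∘ u) := by
  have hcorner : (cornerMultiplicity fun x y => G (x + δ) (y + δ)) ∘
      (Equiv.addRight (δ, δ)).symm = cornerMultiplicity G := by
    ext p
    have hbox (ε : ℝ) : boxCount (fun x y => G (x + δ) (y + δ)) (p + (-δ, -δ)) ε ε =
        boxCount G p ε ε := by
      simp [boxCount, ← sub_eq_add_neg, sub_right_comm _ δ, sub_add_eq_add_sub]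
    simp [cornerMultiplicity, hbox]
  exact hcorner ▸ hu.map (Equiv.addRight (δ, δ)) fun p => by simp

lemma exists_matched_diagrams {I : ℝ → ℝ → ℤ} {c : ℝ} (hc : 0 ≤ c) (hF : IsRankFunction F)
    (hI : IsRankFunction I) (hH : IsRankFunction H) (hIF : IncrementsLE 0 I F)
    (hFI : IncrementsLE c F I) (hIH : IncrementsLE 0 (reflect I) (reflect H))
    (hHI : IncrementsLE c (reflect H) (reflect I)) :
    ∃ (J : Type) (_ : Countable J) (u v : J → ℝ × ℝ), IsDiagram (cornerMultiplicity F) u ∧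
      IsDiagram (cornerMultiplicity H) v ∧ ∀ j, u j ∈ Icc (v j) (v j + (c, c)) ∨
        (u j).2 - (u j).1 ≤ c ∧ (v j).2 - (v j).1 ≤ c := by
  obtain ⟨J, _, w, u, hw, hu, hwu⟩ := exists_same_birth_matching hc hI hF hIF hFI
  obtain ⟨K, _, w', v, hw', hv, hwv⟩ :=
    exists_same_birth_matching hc hI.reflect hH.reflect hIH hHI
  obtain ⟨e, he⟩ := hw.exists_equiv hw'.negSwap_comp
  refine ⟨J, inferInstance, u, negSwap ∘ v ∘ e, hu, (hv.comp_equiv e).negSwap_comp, fun j => ?_⟩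
  obtain ⟨hbirth, hdeath⟩ := hwu j
  obtain ⟨hbirth', hdeath'⟩ := hwv (e j)
  simp only [Function.comp_apply, negSwap_apply, mem_Icc, Prod.ext_iff, Prod.le_def, Prod.fst_add,
    Prod.snd_add] at he hdeath hdeath' ⊢
  refine (he j).imp ?_ ?_
  · rintro ⟨h₁, h₂⟩
    refine ⟨⟨?_, ?_⟩, ?_, ?_⟩ <;> linarith
  · rintro ⟨h₁, h₂⟩
    constructor <;> linarith

end Diagrams

end RankFunctions

section SizeFunctions

variable {M : Type*} [TopologicalSpace M] {α α' β β' φ ψ : M → ℝ}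

lemma rsf_eq_componentCount (φ : M → ℝ) (x y : ℝ) :
    rsf φ x y = componentCount {P | φ P ≤ x} {P | φ P ≤ y} := by
  simp only [rsf, componentCount, image, mem_ofPred_eq, eq_comm]

/-- The size function of the pair `β ≤ α`, counting the components of `{β ≤ y}` that meet
`{α ≤ x}`, less its value at `y = ∞`. The subtracted term depends on `x` only and so has no
effect on the multiplicities of points. -/
noncomputable def sizeRank (α β : M → ℝ) (x y : ℝ) : ℤ :=
  componentCount {P | α P ≤ x} {P | β P ≤ y} - componentCount {P | α P ≤ x} univ

lemma mult_eq_cornerMultiplicity (φ : M → ℝ) :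
    mult φ = cornerMultiplicity (sizeRank φ φ) := by
  ext p
  rw [mult, cornerMultiplicity]
  congr 1
  ext z
  simp only [mem_ofPred_eq, mem_image, mem_Ioo, and_assoc]
  refine exists_congr fun ε => and_congr_right fun _ => and_congr ?_ ?_
  · constructor <;> intro <;> linarith
  · rw [eq_comm, boxCount]
    simp only [sizeRank, rsf_eq_componentCount]
    ring_nf

section Compact

variable [CompactSpace M] [LocallyConnectedSpace M]

lemma finite_components_sublevel (hα : Continuous α) (hβ : Continuous β) (hβα : β ≤ α) {x y : ℝ}
    (hxy : x < y) : (connectedComponentIn {P | β P ≤ y} '' {P | α P ≤ x}).Finite := by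
  refine finite_image_connectedComponentIn_of_isCompact
    (isClosed_le hα continuous_const).isCompact fun P hP => ?_
  exact interior_maximal (fun Q hQ => le_of_lt hQ) (isOpen_lt hβ continuous_const)
    (((hβα P).trans hP).trans_lt hxy)

lemma sizeRank_add_sizeRank_le (hα' : Continuous α') (hβ : Continuous β) (hβα : β ≤ α')
    {x x' y y' : ℝ} (hA : {P | α P ≤ x} ⊆ {P | α' P ≤ x'}) (hxy : x' < y)
    (hB : {P | β P ≤ y} ⊆ {P | β' P ≤ y'}) :
    sizeRank α' β' x' y' + sizeRank α β x y ≤ sizeRank α' β x' y + sizeRank α β' x y' := by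
  have hAB : {P | α' P ≤ x'} ⊆ {P | β P ≤ y} := fun P hP => ((hβα P).trans hP).trans hxy.le
  have := componentCount_add_componentCount_le hA hAB hB
    (finite_components_sublevel hα' hβ hβα hxy)
  unfold sizeRank
  lia

lemma isRankFunction_sizeRank (hα : Continuous α) (hβ : Continuous β) (hβα : β ≤ α) :
    IsRankFunction (sizeRank α β) where
  box_le x x' y y' hx hxy hy := sizeRank_add_sizeRank_le hα hβ hβα
    (fun P hP => le_trans hP hx) hxy fun P hP => le_trans hP hy
  eq_zero_of_ge := by
    obtain ⟨Y, hY⟩ := (isCompact_range hβ).bddAbove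
    refine ⟨Y, fun x y _ hy => ?_⟩
    have huniv : {P | β P ≤ y} = univ := eq_univ_of_forall fun P => (hY (mem_range_self P)).trans hy
    rw [sizeRank, huniv, sub_self]
  eq_zero_of_le := by
    obtain ⟨X, hX⟩ := (isCompact_range hα).bddBelow
    refine ⟨X - 1, fun x y _ hx => ?_⟩
    have hempty : {P | α P ≤ x} = ∅ := eq_empty_iff_forall_notMem.2 fun P hP => by
      have := hX (mem_range_self P)
      have : α P ≤ x := hP
      linarith
    simp [sizeRank, hempty, componentCount]

lemma incrementsLE_sizeRank (hα : Continuous α) (hβ' : Continuous β') (hβα : β' ≤ α) {c : ℝ}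
    (hββ' : ∀ P, β P ≤ β' P + c) : IncrementsLE c (sizeRank α β) (sizeRank α β') := by
  intro x x' y hx hxy
  have := sizeRank_add_sizeRank_le (β' := β) (y' := y + c) hα hβ' hβα
    (fun P hP => le_trans hP hx) hxy fun P hP => (hββ' P).trans (add_le_add_left hP c)
  linarith

lemma incrementsLE_reflect_sizeRank (hα' : Continuous α') (hβ : Continuous β) (hβα : β ≤ α')
    {c : ℝ} (hαα' : ∀ P, α' P ≤ α P + c) :
    IncrementsLE c (reflect (sizeRank α β)) (reflect (sizeRank α' β)) := by
  intro x x' y hx hxy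
  have := sizeRank_add_sizeRank_le (α := α) (x := -(y + c)) (x' := -y) hα' hβ hβα
    (fun P hP => (hαα' P).trans (by have : α P ≤ -(y + c) := hP; linarith)) (neg_lt_neg hxy)
    fun P hP => le_trans hP (neg_le_neg hx)
  unfold reflect
  linarith

lemma exists_matched_cornerpoints (hφ : Continuous φ) (hψ : Continuous ψ) {δ : ℝ} (hδ : 0 ≤ δ)
    (h : ∀ P, |φ P - ψ P| ≤ δ) :
    ∃ (J : Type) (_ : Countable J) (u v : J → ℝ × ℝ), IsDiagram (mult φ) u ∧
      IsDiagram (mult ψ) v ∧ ∀ j, min (dist (u j) (v j))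
        (max (((u j).2 - (u j).1) / 2) (((v j).2 - (v j).1) / 2)) ≤ δ := by
  let χ : M → ℝ := fun P => ψ P - δ
  have hχ : Continuous χ := hψ.sub continuous_const
  have hχφ : χ ≤ φ := fun P => by linarith [abs_le.1 (h P)]
  have hφχ : ∀ P, φ P ≤ χ P + 2 * δ := fun P => by linarith [abs_le.1 (h P)]
  have hshift : sizeRank χ χ = fun x y => sizeRank ψ ψ (x + δ) (y + δ) := by
    funext x y
    simp only [χ, sizeRank, sub_le_iff_le_add]
  obtain ⟨J, _, u, v, hu, hv, huv⟩ := exists_matched_diagrams (mul_nonneg zero_le_two hδ)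
    (isRankFunction_sizeRank hφ hφ le_rfl) (isRankFunction_sizeRank hφ hχ hχφ)
    (isRankFunction_sizeRank hχ hχ le_rfl)
    (incrementsLE_sizeRank hφ hφ le_rfl fun P => by simpa using hχφ P)
    (incrementsLE_sizeRank hφ hχ hχφ hφχ)
    (incrementsLE_reflect_sizeRank hχ hχ le_rfl fun P => by simpa using hχφ P)
    (incrementsLE_reflect_sizeRank hφ hχ hχφ hφχ)
  refine ⟨J, inferInstance, u, (· + (δ, δ)) ∘ v, mult_eq_cornerMultiplicity φ ▸ hu,
    mult_eq_cornerMultiplicity ψ ▸ (hshift ▸ hv).add_comp, fun j => ?_⟩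
  rcases huv j with ⟨⟨hle₁, hle₂⟩, hge₁, hge₂⟩ | ⟨hu₀, hv₀⟩
  · simp only [Prod.fst_add, Prod.snd_add] at hge₁ hge₂
    refine min_le_of_left_le (max_le ?_ ?_) <;>
    · simp only [Real.dist_eq, abs_le, Function.comp_apply, Prod.fst_add, Prod.snd_add]
      constructor <;> linarith
  · refine min_le_of_right_le (max_le (by linarith) ?_)
    simp only [Function.comp_apply, Prod.fst_add, Prod.snd_add]
    linarith

lemma multInf_pos (hφ : Continuous φ) {k : ℝ} (hk : IsLeast (range φ) k) : 0 < multInf φ k := by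
  refine Int.lt_of_lt_of_le one_pos (le_csInf ?_ ?_)
  · have hpos : 0 < |k| + 2 := by positivity
    refine ⟨_, 1 / (|k| + 2), by positivity, ?_, rfl⟩
    have hone : 1 / (|k| + 2) ≤ 1 := (div_le_one hpos).2 (by linarith [abs_nonneg k])
    rw [one_div_one_div]
    linarith [le_abs_self k]
  · obtain ⟨⟨P, rfl⟩, hP⟩ := hk
    rintro _ ⟨ε, hε, hlt, rfl⟩
    have hempty : {Q | φ Q ≤ φ P - ε} = ∅ :=
      eq_empty_iff_forall_notMem.2 fun Q hQ => (sub_lt_self _ hε).not_ge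
        ((hP (mem_range_self Q)).trans hQ)
    have hpos : 0 < rsf φ (φ P + ε) (1 / ε) := by
      rw [rsf_eq_componentCount, componentCount,
        ncard_pos (finite_components_sublevel hφ hφ le_rfl hlt)]
      exact Nonempty.image _ ⟨P, le_add_of_nonneg_right hε.le⟩
    have hzero : rsf φ (φ P - ε) (1 / ε) = 0 := by
      simp [rsf_eq_componentCount, componentCount, hempty]
    lia

end Compact

section Homeomorph

variable {N : Type*} [TopologicalSpace N]

lemma rsf_comp_homeomorph (ψ : N → ℝ) (h : M ≃ₜ N) : rsf (ψ ∘ h) = rsf ψ := by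
  ext x y
  have himage (z : ℝ) : {Q | ψ Q ≤ z} = h '' {P | (ψ ∘ h) P ≤ z} :=
    (image_preimage_eq _ h.surjective).symm
  rw [rsf_eq_componentCount, rsf_eq_componentCount, himage, himage,
    componentCount_image_homeomorph]

lemma dMatch_comp_homeomorph (φ : M → ℝ) (ψ : N → ℝ) (h : M ≃ₜ N) :
    dMatch φ (ψ ∘ h) = dMatch φ ψ := by
  simp only [dMatch, IsRepSeq, mult, multInf, rsf_comp_homeomorph]

end Homeomorph

section RepresentativeSequences

variable {J : Type*} {u : J → ℝ × ℝ} {k : ℝ}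

/-- The family `u` of points of the plane together with the cornerpoint at infinity `(k, ∞)`, which
is listed at `none`. -/
noncomputable def withInfinity (k : ℝ) (u : J → ℝ × ℝ) : Option J → ℝ × EReal
  | none => (k, ⊤)
  | some j => ((u j).1, (u j).2)

lemma preimage_withInfinity (k : ℝ) (u : J → ℝ × ℝ) (x y : ℝ) :
    withInfinity k u ⁻¹' {(x, (y : EReal))} = some '' (u ⁻¹' {(x, y)}) := by
  ext (_ | j) <;> simp [withInfinity, Prod.ext_iff]

lemma IsDiagram.isRepSeq {φ : M → ℝ} (hu : IsDiagram (mult φ) u) (hk : 0 < multInf φ k)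
    (e : ℕ ≃ Option J) (he : e 0 = none) : IsRepSeq φ (withInfinity k u ∘ e) := by
  refine ⟨⟨k, by simp [he, withInfinity], hk⟩, fun i hi => ?_, fun x y hxy _ => ?_, ?_⟩
  · obtain ⟨j, hj⟩ := Option.ne_none_iff_exists'.1 fun h => hi.ne' (e.injective (h.trans he.symm))
    simp only [Function.comp_apply, hj, withInfinity]
    rcases (hu.le j).lt_or_eq with hlt | heq
    · refine Or.inl ⟨_, _, rfl, hlt, ?_⟩
      have hne : (u ⁻¹' {u j}).encard ≠ 0 := encard_ne_zero.2 ⟨j, rfl⟩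
      rw [hu.encard_fiber _ hlt] at hne
      simpa using hne
    · exact Or.inr ⟨(u j).1, by rw [heq]⟩
  · change (e ⁻¹' (withInfinity k u ⁻¹' {(x, (y : EReal))})).ncard = _
    rw [ncard, encard_preimage_of_bijective e.bijective, preimage_withInfinity,
      (Option.some_injective J).encard_image, hu.encard_fiber _ hxy, ENat.toNat_natCast]
  · have hinj : Function.Injective (e.symm ∘ some) :=
      e.symm.injective.comp (Option.some_injective J)
    refine (hu.infinite_diagonal.image hinj.injOn).mono ?_
    rintro _ ⟨j, hj, rfl⟩
    exact ⟨(u j).1, by simp [withInfinity, hj.symm]⟩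

lemma exists_equiv_option (J : Type*) [Countable J] [Infinite J] :
    ∃ e : ℕ ≃ Option J, e 0 = none := by
  obtain ⟨e⟩ : Nonempty (ℕ ≃ Option J) := nonempty_equiv_of_countable
  exact ⟨(Equiv.swap 0 (e.symm none)).trans e, by simp⟩

lemma eDist_coe (p q : ℝ × ℝ) : eDist (p.1, (p.2 : EReal)) (q.1, (q.2 : EReal)) =
    ENNReal.ofReal (min (dist p q) (max ((p.2 - p.1) / 2) ((q.2 - q.1) / 2))) := by
  simp [eDist, Prod.dist_eq, Real.dist_eq]

end RepresentativeSequences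

lemma abs_sub_le_of_isLeast_range {X : Type*} {f g : X → ℝ} {m n δ : ℝ}
    (hm : IsLeast (range f) m) (hn : IsLeast (range g) n) (h : ∀ x, |f x - g x| ≤ δ) :
    |m - n| ≤ δ := by
  obtain ⟨⟨x, rfl⟩, hx⟩ := hm
  obtain ⟨⟨y, rfl⟩, hy⟩ := hn
  have hxy := hx (mem_range_self y)
  have hyx := hy (mem_range_self x)
  exact abs_le.2 ⟨by linarith [abs_le.1 (h x)], by linarith [abs_le.1 (h y)]⟩

section Stability

variable [CompactSpace M] [LocallyConnectedSpace M] [Nonempty M]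

lemma dMatch_le_of_forall_abs_sub_le (hφ : Continuous φ) (hψ : Continuous ψ) {δ : ℝ}
    (h : ∀ P, |φ P - ψ P| ≤ δ) : dMatch φ ψ ≤ ENNReal.ofReal δ := by
  obtain ⟨m, hm⟩ := (isCompact_range hφ).exists_isLeast (range_nonempty φ)
  obtain ⟨n, hn⟩ := (isCompact_range hψ).exists_isLeast (range_nonempty ψ)
  have hmn := abs_sub_le_of_isLeast_range hm hn h
  obtain ⟨J, _, u, v, hu, hv, huv⟩ :=
    exists_matched_cornerpoints hφ hψ ((abs_nonneg _).trans hmn) h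
  have : Infinite J := infinite_univ_iff.1 (hu.infinite_diagonal.mono (subset_univ _))
  obtain ⟨e, he⟩ := exists_equiv_option J
  calc dMatch φ ψ ≤ dMatchSeq (withInfinity m u ∘ e) (withInfinity n v ∘ e) :=
        sInf_le ⟨_, _, hu.isRepSeq (multInf_pos hφ hm) e he, hv.isRepSeq (multInf_pos hψ hn) e he,
          rfl⟩
    _ ≤ ⨆ i, eDist (withInfinity m u (e i)) (withInfinity n v (e i)) :=
        iInf_le _ (⟨id, Function.bijective_id⟩ : {σ : ℕ → ℕ // Function.Bijective σ})
    _ ≤ ENNReal.ofReal δ := iSup_le fun i => by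
        rcases e i with _ | j
        · simpa [withInfinity, eDist] using ENNReal.ofReal_le_ofReal hmn
        · exact (eDist_coe (u j) (v j)).trans_le (ENNReal.ofReal_le_ofReal (huv j))

lemma dMatch_le_iSup (hφ : Continuous φ) (hψ : Continuous ψ) :
    dMatch φ ψ ≤ ⨆ P, ENNReal.ofReal |φ P - ψ P| := by
  by_cases htop : ⨆ P, ENNReal.ofReal |φ P - ψ P| = ⊤
  · exact htop ▸ le_top
  · rw [← ENNReal.ofReal_toReal htop]
    refine dMatch_le_of_forall_abs_sub_le hφ hψ fun P => ?_
    rw [← ENNReal.ofReal_le_iff_le_toReal htop]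
    exact le_iSup (fun P => ENNReal.ofReal |φ P - ψ P|) P

end Stability

end SizeFunctions

theorem matching_distance_lower_bound_for_natural_pseudodistance_general
    {M N : Type*} [TopologicalSpace M] [CompactSpace M] [LocallyConnectedSpace M] [Nonempty M]
    [TopologicalSpace N] {φ : M → ℝ} {ψ : N → ℝ} (hφ : Continuous φ) (hψ : Continuous ψ) :
    dMatch φ ψ ≤ ⨅ h : M ≃ₜ N, ⨆ Q : M, ENNReal.ofReal |φ Q - ψ (h Q)| :=
  le_iInf fun h => dMatch_comp_homeomorph φ ψ h ▸ dMatch_le_iSup hφ (hψ.comp h.continuous)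

theorem matching_distance_lower_bound_for_natural_pseudodistance
    {M N : Type*} [TopologicalSpace M] [CompactSpace M] [ConnectedSpace M] [LocallyConnectedSpace M] [T2Space M] [TopologicalSpace N] [CompactSpace N] [ConnectedSpace N] [LocallyConnectedSpace N] [T2Space N]
    {φ : M → ℝ} {ψ : N → ℝ} (hφ : Continuous φ) (hψ : Continuous ψ)
    (hhomeo : Nonempty (M ≃ₜ N)) :
    dMatch φ ψ ≤ ⨅ h : M ≃ₜ N, ⨆ Q : M, ENNReal.ofReal |φ Q - ψ (h Q)| :=
  matching_distance_lower_bound_for_natural_pseudodistance_general hφ hψ
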